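/- arXiv:2007.01672 — 4 statements merged into one kernel-verified Lean document; each statement's English description precedes it below -/
import Mathlib

section
/- For every p ≥ 2 and every θ ∈ ℝ^d, the Lyapunov function V_p satisfies the drift condition β^{-1} ΔV_p(θ) − ⟨h(θ), ∇V_p(θ)⟩ ≤ −(a p / 4) V_p(θ) + (3/4) a p (1 + M̄_p^2)^{(p+1)/2}, where M̄_p := sqrt( (4/3 + 4b/(3a) + 4d/(3aβ) + 4(p−2)/(3aβ) + 4E[K1(X_0)]/(3a))^2 − 1 ). -/
open MeasureTheory ProbabilityTheory Real
open scoped RealInnerProductSpace ENNReal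

noncomputable section

/-- The Laplacian of `f : ℝ^d → ℝ` at `x`, as the sum of second directional derivatives
along the coordinate directions. -/
def laplacian {d : ℕ} (f : EuclideanSpace ℝ (Fin d) → ℝ) (x : EuclideanSpace ℝ (Fin d)) : ℝ :=
  ∑ i : Fin d, iteratedDeriv 2 (fun t : ℝ => f (x + t • EuclideanSpace.single i (1 : ℝ))) 0

/-- The Lyapunov function `V_p(θ) = (1+|θ|²)^{p/2}`. -/
def lyapunovV {d : ℕ} (p : ℝ) (θ : EuclideanSpace ℝ (Fin d)) : ℝ := (1 + ‖θ‖ ^ 2) ^ (p / 2)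

lemma lap_lyapunov {d : ℕ} (p : ℝ) (θ : EuclideanSpace ℝ (Fin d)) :
    laplacian (lyapunovV p) θ = p * d * (1 + ‖θ‖ ^ 2) ^ (p / 2 - 1)
      + p * (p - 2) * ‖θ‖ ^ 2 * (1 + ‖θ‖ ^ 2) ^ (p / 2 - 2) := by
  have hq : ∀ (i : Fin d) (t : ℝ), lyapunovV p (θ + t • EuclideanSpace.single i (1 : ℝ))
      = (1 + ‖θ‖ ^ 2 + 2 * t * θ i + t ^ 2) ^ (p / 2) := by
    intro i t
    unfold lyapunovV
    congr 1
    rw [norm_add_sq_real, inner_smul_right, EuclideanSpace.inner_single_right, norm_smul]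
    simp
    ring
  have hpos : ∀ (i : Fin d) (t : ℝ), 0 < 1 + ‖θ‖ ^ 2 + 2 * t * θ i + t ^ 2 := by
    intro i t
    have h1 : (θ i) ^ 2 ≤ ‖θ‖ ^ 2 := by
      rw [EuclideanSpace.real_norm_sq_eq]
      exact Finset.single_le_sum (f := fun j => θ j ^ 2) (fun j _ => sq_nonneg _) (Finset.mem_univ i)
    nlinarith [sq_nonneg (t + θ i)]
  have hqd : ∀ (i : Fin d) (t : ℝ), HasDerivAt
      (fun t : ℝ => 1 + ‖θ‖ ^ 2 + 2 * t * θ i + t ^ 2) (2 * θ i + 2 * t) t := by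
    intro i t
    have := ((((hasDerivAt_id t).const_mul (2 * θ i)).add (hasDerivAt_pow 2 t)).const_add (1 + ‖θ‖ ^ 2))
    have e : (fun t : ℝ => 1 + ‖θ‖ ^ 2 + 2 * t * θ i + t ^ 2) =
        fun x : ℝ => 1 + ‖θ‖ ^ 2 + (2 * θ i * x + x ^ 2) := by
      funext s; ring
    rw [e]
    exact HasDerivAt.congr_deriv this (by simp)
  have h2 : ∀ i : Fin d, iteratedDeriv 2
      (fun t : ℝ => lyapunovV p (θ + t • EuclideanSpace.single i (1 : ℝ))) 0
      = p * (1 + ‖θ‖ ^ 2) ^ (p / 2 - 1) + p * (p - 2) * (1 + ‖θ‖ ^ 2) ^ (p / 2 - 2) * (θ i) ^ 2 := by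
    intro i
    simp_rw [hq i]
    rw [iteratedDeriv_succ, iteratedDeriv_one]
    have e1 : deriv (fun t : ℝ => (1 + ‖θ‖ ^ 2 + 2 * t * θ i + t ^ 2) ^ (p / 2))
        = fun t => (2 * θ i + 2 * t) * (p / 2) * (1 + ‖θ‖ ^ 2 + 2 * t * θ i + t ^ 2) ^ (p / 2 - 1) := by
      ext t
      exact ((hqd i t).rpow_const (Or.inl (hpos i t).ne')).deriv
    rw [e1]
    have e2 : HasDerivAt (fun t : ℝ => (2 * θ i + 2 * t) * (p / 2)) p 0 := by
      have := (((hasDerivAt_id (0:ℝ)).const_mul 2).const_add (2 * θ i)).mul_const (p / 2)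
      exact this.congr_deriv (by ring)
    have e3 := e2.mul ((hqd i 0).rpow_const (p := p / 2 - 1) (Or.inl (hpos i 0).ne'))
    refine e3.deriv.trans ?_
    simp only [mul_zero, zero_mul, add_zero, ne_eq, OfNat.ofNat_ne_zero, not_false_eq_true, zero_pow]
    rw [show p / 2 - 1 - 1 = p / 2 - 2 by ring]
    ring
  unfold laplacian
  rw [Finset.sum_congr rfl (fun i _ => h2 i), Finset.sum_add_distrib, ← Finset.mul_sum Finset.univ (fun i => θ i ^ 2),
    ← EuclideanSpace.real_norm_sq_eq]
  simp
  ring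

lemma grad_lyapunov {d : ℕ} (p : ℝ) (θ : EuclideanSpace ℝ (Fin d)) :
    gradient (lyapunovV p) θ = (p * (1 + ‖θ‖ ^ 2) ^ (p / 2 - 1)) • θ := by
  apply HasGradientAt.gradient
  rw [hasGradientAt_iff_hasFDerivAt]
  have h1 := ((hasStrictFDerivAt_norm_sq θ).hasFDerivAt.const_add 1).rpow_const (p := p / 2)
    (Or.inl (by positivity))
  refine h1.congr_fderiv ?_
  ext y
  simp [inner_smul_left]
  ring

lemma drift_core (a p β D b K u r : ℝ) (C s : ℝ) (ha : 0 < a) (hp : 2 ≤ p) (hβ : 0 < β)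
    (hD : 0 ≤ D) (hb : 0 < b) (hK : 0 ≤ K) (hr : 0 ≤ r) (hu : u = 1 + r ^ 2) (hs : s = √u)
    (hC : C = 4/3 + 4 * b / (3 * a) + 4 * D / (3 * a * β)
        + 4 * (p - 2) / (3 * a * β) + 4 * K / (3 * a)) (I : ℝ)
    (hI : a * r ^ 2 - b - K * r ≤ I) :
    β⁻¹ * (p * D * u ^ (p / 2 - 1) + p * (p - 2) * r ^ 2 * u ^ (p / 2 - 2))
      - p * u ^ (p / 2 - 1) * I ≤ -(a * p / 4) * u ^ (p / 2) +
        (3/4) * a * p * (1 + √(C ^ 2 - 1) ^ 2) ^ ((p + 1) / 2) := by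
  have hu1 : 1 ≤ u := by nlinarith [sq_nonneg r]
  have hu0 : 0 < u := by linarith
  have hC1 : 1 ≤ C := by
    have h1 : 0 ≤ 4 * b / (3 * a) := by positivity
    have h2 : 0 ≤ 4 * D / (3 * a * β) := by positivity
    have h3 : 0 ≤ 4 * (p - 2) / (3 * a * β) := div_nonneg (by linarith) (by positivity)
    have h4 : 0 ≤ 4 * K / (3 * a) := by positivity
    linarith
  have hss : s ^ 2 = u := by rw [hs]; exact Real.sq_sqrt hu0.le
  have hs1 : 1 ≤ s := by rw [hs]; exact Real.one_le_sqrt.mpr hu1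
  have hs0 : 0 < s := by linarith
  have hrs : r ≤ s := by rw [hs]; apply Real.le_sqrt_of_sq_le; linarith
  have hT : a + b + D / β + (p - 2) / β + K = 3 / 4 * a * C := by
    rw [hC]; field_simp
  have eC : (1 + √(C ^ 2 - 1) ^ 2) ^ ((p + 1) / 2) = C ^ (p + 1) := by
    rw [Real.sq_sqrt (by nlinarith), show 1 + (C ^ 2 - 1) = C ^ (2:ℝ) by norm_num,
      ← Real.rpow_mul (by linarith)]
    congr 1; ring
  rw [eC]
  have e2 : u ^ (p / 2) = s ^ p := by
    rw [← hss, ← Real.rpow_natCast, ← Real.rpow_mul hs0.le]; congr 1; push_cast; ring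
  have e1 : u ^ (p / 2) = u ^ (p / 2 - 1) * s ^ 2 := by
    rw [hss, ← Real.rpow_add_one hu0.ne']; congr 1; ring
  have e0 : u ^ (p / 2 - 1) = u ^ (p / 2 - 2) * u := by
    rw [← Real.rpow_add_one hu0.ne']; congr 1; ring
  have e3 : s ^ p = s ^ (p - 1) * s := by
    rw [← Real.rpow_add_one hs0.ne']; congr 1; ring
  have hw : 0 < u ^ (p / 2 - 1) := by positivity
  have hv : 0 < u ^ (p / 2 - 2) := by positivity
  have hsp : 0 < s ^ (p - 1) := by positivity
  have ew : u ^ (p / 2 - 1) * s = s ^ (p - 1) := by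
    have : u ^ (p / 2 - 1) * s * s = s ^ (p - 1) * s := by rw [← e3, ← e2, e1]; ring
    exact mul_right_cancel₀ hs0.ne' this
  -- step 1
  have st1 : r ^ 2 * u ^ (p / 2 - 2) ≤ u ^ (p / 2 - 1) := by
    rw [e0, mul_comm]; exact mul_le_mul_of_nonneg_left (by linarith) hv.le
  have hbi : 0 < β⁻¹ := by positivity
  have hpp : 0 ≤ p - 2 := by linarith
  have st2 : β⁻¹ * (p * D * u ^ (p / 2 - 1) + p * (p - 2) * r ^ 2 * u ^ (p / 2 - 2))
      - p * u ^ (p / 2 - 1) * I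
      ≤ p * u ^ (p / 2 - 1) * (D / β + (p - 2) / β - (a * r ^ 2 - b - K * r)) := by
    have h1 : β⁻¹ * (p * (p - 2)) * (r ^ 2 * u ^ (p / 2 - 2)) ≤
        β⁻¹ * (p * (p - 2)) * u ^ (p / 2 - 1) :=
      mul_le_mul_of_nonneg_left st1 (by positivity)
    have h2 : p * u ^ (p / 2 - 1) * (a * r ^ 2 - b - K * r) ≤ p * u ^ (p / 2 - 1) * I :=
      mul_le_mul_of_nonneg_left hI (by positivity)
    rw [div_eq_mul_inv D, div_eq_mul_inv (p - 2)]
    linarith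
  have st3 : D / β + (p - 2) / β - (a * r ^ 2 - b - K * r) ≤ 3 / 4 * a * C * s - a * s ^ 2 := by
    have h1 : 0 ≤ (a + b + D / β + (p - 2) / β) * (s - 1) :=
      mul_nonneg (by positivity) (by linarith)
    have h2 : K * r ≤ K * s := mul_le_mul_of_nonneg_left hrs hK
    have h3 : a * s ^ 2 = a + a * r ^ 2 := by rw [hss, hu]; ring
    rw [← hT]
    linarith
  have st4 : p * u ^ (p / 2 - 1) * (D / β + (p - 2) / β - (a * r ^ 2 - b - K * r)) ≤
      p * u ^ (p / 2 - 1) * (3 / 4 * a * C * s - a * s ^ 2) :=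
    mul_le_mul_of_nonneg_left st3 (by positivity)
  have st5 : p * u ^ (p / 2 - 1) * (3 / 4 * a * C * s - a * s ^ 2) =
      3 / 4 * (a * p) * (s ^ (p - 1) * (C - s)) - (a * p / 4) * u ^ (p / 2) := by
    rw [← ew, e1]; ring
  have st6 : s ^ (p - 1) * (C - s) ≤ C ^ (p + 1) := by
    have hCp : 0 < C ^ (p + 1) := by positivity
    rcases le_total C s with hcs | hcs
    · have : s ^ (p - 1) * (C - s) ≤ 0 := mul_nonpos_of_nonneg_of_nonpos hsp.le (by linarith)
      linarith
    · have h1 : s ^ (p - 1) ≤ C ^ (p - 1) := Real.rpow_le_rpow hs0.le hcs (by linarith)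
      have h2 : C ^ (p + 1) = C ^ (p - 1) * C * C := by
        rw [← Real.rpow_add_one (by linarith), ← Real.rpow_add_one (by linarith)]
        congr 1; ring
      have hc : 0 < C ^ (p - 1) := by positivity
      have h3 : s ^ (p - 1) * (C - s) ≤ C ^ (p - 1) * C :=
        mul_le_mul h1 (by linarith) (by linarith) hc.le
      have h4 : 0 < C ^ (p - 1) * C := by positivity
      have h5 : C ^ (p - 1) * C * 1 ≤ C ^ (p - 1) * C * C :=
        mul_le_mul_of_nonneg_left hC1 h4.le
      linarith
  have st7 : 3 / 4 * (a * p) * (s ^ (p - 1) * (C - s)) ≤ 3 / 4 * (a * p) * C ^ (p + 1) :=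
    mul_le_mul_of_nonneg_left st6 (by positivity)
  linarith

/-- Drift condition for the Langevin SDE: for every `p ≥ 2` and `θ ∈ ℝ^d`,
`β⁻¹ ΔV_p(θ) − ⟨h(θ), ∇V_p(θ)⟩ ≤ −(ap/4) V_p(θ) + (3/4) a p (1 + M̄_p²)^{(p+1)/2}`. -/
theorem langevin_drift_condition {d m : ℕ} (hd : 1 ≤ d) (hm : 1 ≤ m)
    {Ω : Type} [MeasurableSpace Ω] (μ : Measure Ω) [IsProbabilityMeasure μ]
    (H F G : EuclideanSpace ℝ (Fin d) → EuclideanSpace ℝ (Fin m) → EuclideanSpace ℝ (Fin d))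
    (K1 : EuclideanSpace ℝ (Fin m) → ℝ) (hK1 : ∀ x, 0 ≤ K1 x)
    (L1 L2 ρ : ℝ) (hL1 : 0 < L1) (hL2 : 0 < L2) (hρ : 0 ≤ ρ)
    (hdecomp : ∀ θ x, H θ x = F θ x + G θ x)
    (hFLip : ∀ θ θ' x x', ‖F θ x - F θ' x'‖ ≤
      (1 + ‖x‖ + ‖x'‖) ^ ρ * (L1 * ‖θ - θ'‖ + L2 * ‖x - x'‖))
    (hGbdd : ∀ θ x, ‖G θ x‖ ≤ K1 x)
    (X0 : Ω → EuclideanSpace ℝ (Fin m)) (hX0 : Measurable X0)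
    (hXmom : Integrable (fun ω => ‖X0 ω‖ ^ (4 * ρ + 4)) μ)
    (hK1mom : Integrable (fun ω => (K1 (X0 ω)) ^ (4 : ℕ)) μ)
    (hHint : ∀ θ, Integrable (fun ω => H θ (X0 ω)) μ)
    (h : EuclideanSpace ℝ (Fin d) → EuclideanSpace ℝ (Fin d))
    (hdef : ∀ θ, h θ = ∫ ω, H θ (X0 ω) ∂μ)
    (A : EuclideanSpace ℝ (Fin m) → (EuclideanSpace ℝ (Fin d) →ₗ[ℝ] EuclideanSpace ℝ (Fin d)))
    (bfun : EuclideanSpace ℝ (Fin m) → ℝ)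
    (hApsd : ∀ x y, 0 ≤ ⟪y, A x y⟫)
    (hdissip : ∀ θ x, ⟪θ, A x θ⟫ - bfun x ≤ ⟪F θ x, θ⟫)
    (a : ℝ) (ha : 0 < a)
    (haeig : ∀ y : EuclideanSpace ℝ (Fin d), a * ‖y‖ ^ 2 ≤ ∫ ω, ⟪y, A (X0 ω) y⟫ ∂μ)
    (b : ℝ) (hbpos : 0 < b) (hbval : (∫ ω, bfun (X0 ω) ∂μ) = b)
    (β : ℝ) (hβ : 0 < β)
    (p : ℝ) (hp : 2 ≤ p)
    (Mp : ℝ)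
    (hMp : Mp = Real.sqrt ((4/3 + 4 * b / (3 * a) + 4 * (d : ℝ) / (3 * a * β)
        + 4 * (p - 2) / (3 * a * β) + 4 * (∫ ω, K1 (X0 ω) ∂μ) / (3 * a)) ^ 2 - 1)) :
    ∀ θ : EuclideanSpace ℝ (Fin d),
      β⁻¹ * laplacian (lyapunovV p) θ - ⟪h θ, gradient (lyapunovV p) θ⟫ ≤
        -(a * p / 4) * lyapunovV p θ + (3/4) * a * p * (1 + Mp ^ 2) ^ ((p + 1) / 2) := by
  intro θ
  have hKint : Integrable (fun ω => K1 (X0 ω)) μ := by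
    have hm1 : AEStronglyMeasurable (fun ω => K1 (X0 ω)) μ := by
      have h1 := (hK1mom.aestronglyMeasurable.aemeasurable.pow_const (1 / 4 : ℝ)).aestronglyMeasurable
      refine h1.congr (Filter.Eventually.of_forall fun ω => ?_)
      show ((K1 (X0 ω)) ^ (4 : ℕ)) ^ (1 / 4 : ℝ) = _
      rw [← Real.rpow_natCast, ← Real.rpow_mul (hK1 _)]
      norm_num
    refine ((integrable_const (1 : ℝ)).add hK1mom).mono' hm1 (Filter.Eventually.of_forall fun ω => ?_)
    have := hK1 (X0 ω)
    simp only [Real.norm_eq_abs, abs_of_nonneg this, Pi.add_apply]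
    nlinarith [sq_nonneg (K1 (X0 ω) ^ 2 - 1 / 2), sq_nonneg (K1 (X0 ω) - 1 / 2)]
  have hbint : Integrable (fun ω => bfun (X0 ω)) μ := by
    by_contra hc
    rw [integral_undef hc] at hbval
    linarith
  have hAint : Integrable (fun ω => ⟪θ, A (X0 ω) θ⟫) μ := by
    by_cases h0 : θ = 0
    · simp [h0]
    · by_contra hc
      have h1 := haeig θ
      rw [integral_undef hc] at h1
      have : 0 < ‖θ‖ := norm_pos_iff.mpr h0
      have : 0 < a * ‖θ‖ ^ 2 := by positivity
      linarith
  have hK0 : 0 ≤ ∫ ω, K1 (X0 ω) ∂μ := integral_nonneg fun ω => hK1 _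
  have hI : a * ‖θ‖ ^ 2 - b - (∫ ω, K1 (X0 ω) ∂μ) * ‖θ‖ ≤ ⟪h θ, θ⟫ := by
    have e1 : ⟪h θ, θ⟫ = ∫ ω, ⟪θ, H θ (X0 ω)⟫ ∂μ := by
      rw [hdef, real_inner_comm, integral_inner (hHint θ)]
    have e2 : ∫ ω, (⟪θ, A (X0 ω) θ⟫ - bfun (X0 ω) - K1 (X0 ω) * ‖θ‖) ∂μ
        ≤ ∫ ω, ⟪θ, H θ (X0 ω)⟫ ∂μ := by
      refine integral_mono ((hAint.sub hbint).sub (hKint.mul_const _)) ((hHint θ).const_inner θ) ?_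
      intro ω
      show ⟪θ, A (X0 ω) θ⟫ - bfun (X0 ω) - K1 (X0 ω) * ‖θ‖ ≤ ⟪θ, H θ (X0 ω)⟫
      rw [hdecomp, inner_add_right]
      have h1 := hdissip θ (X0 ω)
      rw [real_inner_comm θ (F θ (X0 ω))] at h1
      have h2 := abs_le.mp (abs_real_inner_le_norm θ (G θ (X0 ω)))
      have h3 : ‖θ‖ * ‖G θ (X0 ω)‖ ≤ ‖θ‖ * K1 (X0 ω) :=
        mul_le_mul_of_nonneg_left (hGbdd _ _) (norm_nonneg _)
      linarith [h2.1]
    have e4 : ∫ ω, (⟪θ, A (X0 ω) θ⟫ - bfun (X0 ω) - K1 (X0 ω) * ‖θ‖) ∂μ =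
        ∫ ω, (⟪θ, A (X0 ω) θ⟫ - bfun (X0 ω)) ∂μ - ∫ ω, K1 (X0 ω) * ‖θ‖ ∂μ :=
      integral_sub (hAint.sub hbint) (hKint.mul_const _)
    rw [e4, integral_sub hAint hbint,
      integral_mul_const, hbval] at e2
    rw [e1]
    linarith [haeig θ]
  have key := drift_core a p β d b (∫ ω, K1 (X0 ω) ∂μ) (1 + ‖θ‖ ^ 2) ‖θ‖ _ _ ha hp hβ
    (Nat.cast_nonneg d) hbpos hK0 (norm_nonneg θ) rfl rfl rfl _ hI
  rw [lap_lyapunov, grad_lyapunov, inner_smul_right, hMp]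
  exact key
end
end

section
/- If F is Lipschitz in the stated joint sense and satisfies the convexity condition with matrix Â1(x), then for every ε > 0, every θ ∈ ℝ^d and x ∈ ℝ^m, ⟨F(θ,x), θ⟩ ≥ ⟨θ, (Â1(x) − ε I_d) θ⟩ − (L2(1+|x|)^{ρ+1} + |F(0,0)|)^2 / (4ε). That is, F satisfies the dissipativity condition with A(x) = Â1(x) − ε I_d and b(x) = (L2(1+|x|)^{ρ+1} + |F(0,0)|)^2/(4ε). -/
open MeasureTheory Real
open scoped RealInnerProductSpace

/-- If `F` is jointly Lipschitz and satisfies the convexity condition with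
the positive semidefinite matrix (linear map) `Â₁(x)`, then for every `ε > 0`, `θ`, `x`,
`⟨F(θ,x), θ⟩ ≥ ⟨θ, (Â₁(x) − ε I_d) θ⟩ − (L2(1+|x|)^{ρ+1} + |F(0,0)|)²/(4ε)`;
i.e. `F` is dissipative with `A(x) = Â₁(x) − ε I_d` and
`b(x) = (L2(1+|x|)^{ρ+1} + |F(0,0)|)²/(4ε)`. -/
theorem dissipativity_of_convexity {d m : ℕ} (hd : 1 ≤ d) (hm : 1 ≤ m)
    (F : EuclideanSpace ℝ (Fin d) → EuclideanSpace ℝ (Fin m) → EuclideanSpace ℝ (Fin d))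
    (L1 L2 ρ : ℝ) (hL1 : 0 < L1) (hL2 : 0 < L2) (hρ : 0 ≤ ρ)
    (hFLip : ∀ θ θ' x x', ‖F θ x - F θ' x'‖ ≤
      (1 + ‖x‖ + ‖x'‖) ^ ρ * (L1 * ‖θ - θ'‖ + L2 * ‖x - x'‖))
    (Ahat1 : EuclideanSpace ℝ (Fin m) → (EuclideanSpace ℝ (Fin d) →ₗ[ℝ] EuclideanSpace ℝ (Fin d)))
    (hpsd : ∀ x y, 0 ≤ ⟪y, Ahat1 x y⟫)
    (hconv : ∀ θ θ' x, ⟪θ - θ', Ahat1 x (θ - θ')⟫ ≤ ⟪F θ x - F θ' x, θ - θ'⟫) :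
    ∀ ε : ℝ, 0 < ε →
      ∀ (θ : EuclideanSpace ℝ (Fin d)) (x : EuclideanSpace ℝ (Fin m)),
        ⟪θ, (Ahat1 x - ε • (LinearMap.id : EuclideanSpace ℝ (Fin d) →ₗ[ℝ]
            EuclideanSpace ℝ (Fin d))) θ⟫
          - (L2 * (1 + ‖x‖) ^ (ρ + 1)
              + ‖F (0 : EuclideanSpace ℝ (Fin d)) (0 : EuclideanSpace ℝ (Fin m))‖) ^ 2 / (4 * ε)
        ≤ ⟪F θ x, θ⟫ := by
  intro ε hε θ x
  have h1 := hconv θ 0 x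
  have h2 := hFLip 0 0 x 0
  simp only [sub_zero, norm_zero, add_zero, mul_zero, zero_add, inner_sub_left] at h1 h2
  have hx : 0 ≤ ‖x‖ := norm_nonneg x
  have hp : (1 + ‖x‖) ^ (ρ + 1) = (1 + ‖x‖) ^ ρ * (1 + ‖x‖) := by
    rw [Real.rpow_add (by linarith), Real.rpow_one]
  have hpos : 0 ≤ (1 + ‖x‖) ^ ρ := Real.rpow_nonneg (by linarith) _
  have h3 : ‖F 0 x‖ ≤ L2 * (1 + ‖x‖) ^ (ρ + 1) + ‖F 0 0‖ := by
    have := norm_le_norm_sub_add (F 0 x) (F 0 0)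
    rw [hp]
    have := mul_nonneg hpos hL2.le
    nlinarith
  have h4 : -(‖F 0 x‖ * ‖θ‖) ≤ ⟪F 0 x, θ⟫ :=
    (abs_le.mp (abs_real_inner_le_norm (F 0 x) θ)).1
  simp only [LinearMap.sub_apply, LinearMap.smul_apply, LinearMap.id_apply, inner_sub_right,
    real_inner_smul_right, real_inner_self_eq_norm_sq]
  set B := L2 * (1 + ‖x‖) ^ (ρ + 1) + ‖F 0 0‖
  have h5 : ‖F 0 x‖ * ‖θ‖ ≤ B * ‖θ‖ := mul_le_mul_of_nonneg_right h3 (norm_nonneg _)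
  have h6 : B * ‖θ‖ ≤ ε * ‖θ‖ ^ 2 + B ^ 2 / (4 * ε) := by
    have : ε * ‖θ‖ ^ 2 + B ^ 2 / (4 * ε) - B * ‖θ‖ = (2 * ε * ‖θ‖ - B) ^ 2 / (4 * ε) := by
      field_simp
      ring
    have : 0 ≤ (2 * ε * ‖θ‖ - B) ^ 2 / (4 * ε) := by positivity
    linarith
  linarith
end

section
/- Let n ≥ 2 and let w, w̄ ∈ ℝ^n agree in all coordinates except possibly the first. Then for every x ∈ ℝ^n, |ĝ_{w_1}(w, x) − ĝ_{w_1}(w̄, x)| ≤ 2 |w_1 − w̄_1| Σ_{i=1}^n |x_i|, where ĝ_{w_1}(w, x) := Σ_{i=1}^n (∂g_i(w)/∂w_1) x_i is the derivative in w_1 of the softmax-weighted sum Σ_i g_i(w) x_i. -/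
open Real Finset

noncomputable section

/-- `ĝ_{w₁}(w, x) = Σᵢ (∂gᵢ(w)/∂w₁) xᵢ`: the derivative in the first coordinate `w₁` of the
softmax-weighted sum `Σᵢ gᵢ(w) xᵢ`, where `gᵢ(w) = e^{wᵢ}/Σⱼ e^{wⱼ}`, given by the explicit
formulas `∂g₁/∂w₁ = e^{w₁}(Σ_{l≠1} e^{w_l})/(Σ_l e^{w_l})²` and
`∂gᵢ/∂w₁ = −e^{wᵢ}e^{w₁}/(Σ_l e^{w_l})²` for `i ≠ 1`. -/
def ghat (n : ℕ) [NeZero n] (w x : Fin n → ℝ) : ℝ :=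
  (Real.exp (w 0) * (∑ l ∈ Finset.univ.erase 0, Real.exp (w l)) /
      (∑ l, Real.exp (w l)) ^ 2) * x 0
  + ∑ i ∈ Finset.univ.erase 0,
      (-(Real.exp (w i) * Real.exp (w 0)) / (∑ l, Real.exp (w l)) ^ 2) * x i

theorem aux_lip (S : ℝ) (hS : 0 < S) (a b : ℝ) :
    |Real.exp a * S / (Real.exp a + S) ^ 2 - Real.exp b * S / (Real.exp b + S) ^ 2|
      ≤ 2 * |a - b| := by
  have hd : ∀ t ∈ (Set.univ : Set ℝ), HasDerivWithinAt
      (fun t => Real.exp t * S / (Real.exp t + S) ^ 2)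
      (Real.exp t * S * (S - Real.exp t) / (Real.exp t + S) ^ 3) Set.univ t := by
    intro t _
    have hu := Real.exp_pos t
    have hne : (Real.exp t + S) ≠ 0 := by positivity
    have h1 := ((Real.hasDerivAt_exp t).mul_const S).div
      (((Real.hasDerivAt_exp t).add_const S).pow 2) (pow_ne_zero 2 hne)
    apply HasDerivAt.hasDerivWithinAt
    refine HasDerivAt.congr_deriv h1 ?_
    simp only [Pi.add_apply, Pi.pow_apply, Pi.mul_apply]
    field_simp
    push_cast
    ring
  have hb : ∀ t ∈ (Set.univ : Set ℝ),
      ‖Real.exp t * S * (S - Real.exp t) / (Real.exp t + S) ^ 3‖ ≤ 2 := by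
    intro t _
    have hu := Real.exp_pos t
    generalize Real.exp t = u at hu
    have h3 : 0 < (u + S) ^ 3 := by positivity
    have p1 : 0 < u * S * S := by positivity
    have p2 : 0 < u * u * S := by positivity
    have p3 : 0 < u ^ 3 := by positivity
    have p4 : 0 < S ^ 3 := by positivity
    rw [Real.norm_eq_abs, abs_le]
    constructor
    · rw [le_div_iff₀ h3]; nlinarith
    · rw [div_le_iff₀ h3]; nlinarith
  have := convex_univ.norm_image_sub_le_of_norm_hasDerivWithin_le hd hb
    (Set.mem_univ b) (Set.mem_univ a)
  simpa [Real.norm_eq_abs] using this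

/-- If `w` and `w̄` agree in all coordinates except possibly the first,
then `|ĝ_{w₁}(w, x) − ĝ_{w₁}(w̄, x)| ≤ 2 |w₁ − w̄₁| Σᵢ |xᵢ|`. -/
theorem ghat_lipschitz_first_coordinate {n : ℕ} [NeZero n] (hn : 2 ≤ n)
    (w wbar x : Fin n → ℝ)
    (hagree : ∀ i : Fin n, i ≠ 0 → w i = wbar i) :
    |ghat n w x - ghat n wbar x| ≤ 2 * |w 0 - wbar 0| * ∑ i, |x i| := by
  set S := ∑ l ∈ Finset.univ.erase 0, Real.exp (w l) with hSdef
  have hSbar : ∑ l ∈ Finset.univ.erase 0, Real.exp (wbar l) = S :=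
    Finset.sum_congr rfl fun i hi => by rw [hagree i (Finset.ne_of_mem_erase hi)]
  have hS : 0 < S := by
    apply Finset.sum_pos (fun i _ => Real.exp_pos _)
    refine ⟨⟨1, by omega⟩, ?_⟩
    simp [Fin.ext_iff]
  clear_value S
  have key : ∀ v : Fin n → ℝ, (∀ i : Fin n, i ≠ 0 → w i = v i) →
      ghat n v x = (Real.exp (v 0) * S / (Real.exp (v 0) + S) ^ 2) *
        (x 0 - ∑ i ∈ Finset.univ.erase 0, Real.exp (w i) / S * x i) := by
    intro v hv
    have h1 : ∑ l ∈ Finset.univ.erase 0, Real.exp (v l) = S := by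
      rw [hSdef]
      exact Finset.sum_congr rfl fun i hi => by rw [hv i (Finset.ne_of_mem_erase hi)]
    have h2 : ∑ l, Real.exp (v l) = Real.exp (v 0) + S := by
      rw [← h1]
      exact (Finset.add_sum_erase _ (fun l => Real.exp (v l)) (Finset.mem_univ 0)).symm
    unfold ghat
    rw [h1, h2, mul_sub, sub_eq_add_neg, Finset.mul_sum, ← Finset.sum_neg_distrib]
    congr 1
    refine Finset.sum_congr rfl fun i hi => ?_
    rw [hv i (Finset.ne_of_mem_erase hi)]
    have := Real.exp_pos (v 0)
    field_simp
  rw [key w (fun _ _ => rfl), key wbar hagree, ← sub_mul, abs_mul]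
  refine mul_le_mul (aux_lip S hS _ _) ?_ (abs_nonneg _) (by positivity)
  rw [← Finset.add_sum_erase _ (fun i => |x i|) (Finset.mem_univ (0 : Fin n))]
  refine (abs_sub _ _).trans (add_le_add le_rfl ?_)
  refine (Finset.abs_sum_le_sum_abs _ _).trans (Finset.sum_le_sum fun i hi => ?_)
  rw [abs_mul, abs_of_pos (div_pos (Real.exp_pos _) hS)]
  refine mul_le_of_le_one_left (abs_nonneg _) ?_
  rw [div_le_one hS, hSdef]
  exact Finset.single_le_sum (f := fun l => Real.exp (w l)) (fun i _ => (Real.exp_pos _).le) hi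
end
end

section
/- Consider the θ-component of the CVaR stochastic gradient, H_θ(θ̂, x) := 1 − (1/(1−q̄)) · 1_{{ Σ_{i=1}^n g_i(w) x_i ≥ θ }} + 2γθ for θ̂ = (θ, w). Then for any θ, θ' ∈ ℝ and any fixed w ∈ ℝ^n, E[ |H_θ((θ, w), X) − H_θ((θ', w), X)| ] ≤ ( 2γ + 2n c / (1 − q̄) ) |θ − θ'|, where c is an upper bound on the densities of the X_i. -/
open MeasureTheory ProbabilityTheory Real

lemma ico_bound_add {Ω : Type} [MeasurableSpace Ω] (μ : Measure Ω) [IsProbabilityMeasure μ]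
    (Y Z : Ω → ℝ) (hY : Measurable Y) (hZ : Measurable Z) (h : IndepFun Y Z μ) (K : ℝ)
    (hK : ∀ a b, μ (Z ⁻¹' Set.Ico a b) ≤ ENNReal.ofReal (K * (b - a))) (a b : ℝ) :
    μ ((fun ω => Y ω + Z ω) ⁻¹' Set.Ico a b) ≤ ENNReal.ofReal (K * (b - a)) := by
  have hp := (indepFun_iff_map_prod_eq_prod_map_map hY.aemeasurable hZ.aemeasurable).1 h
  have : IsProbabilityMeasure (μ.map Y) := Measure.isProbabilityMeasure_map hY.aemeasurable
  have : IsProbabilityMeasure (μ.map Z) := Measure.isProbabilityMeasure_map hZ.aemeasurable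
  have hs : MeasurableSet ((fun p : ℝ × ℝ => p.1 + p.2) ⁻¹' Set.Ico a b) :=
    (measurable_fst.add measurable_snd) measurableSet_Ico
  have e : μ ((fun ω => Y ω + Z ω) ⁻¹' Set.Ico a b)
      = (μ.map (fun ω => (Y ω, Z ω))) ((fun p : ℝ × ℝ => p.1 + p.2) ⁻¹' Set.Ico a b) := by
    rw [Measure.map_apply (hY.prodMk hZ) hs]; rfl
  rw [e, hp, Measure.prod_apply hs]
  calc _ ≤ ∫⁻ _, ENNReal.ofReal (K * (b - a)) ∂(μ.map Y) := by
        apply lintegral_mono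
        intro y
        have e2 : Prod.mk y ⁻¹' ((fun p : ℝ × ℝ => p.1 + p.2) ⁻¹' Set.Ico a b)
            = Set.Ico (a - y) (b - y) := by
          ext z; simp only [Set.mem_preimage, Set.mem_Ico]
          constructor <;> rintro ⟨h1, h2⟩ <;> constructor <;> linarith
        simp only [e2]
        rw [Measure.map_apply hZ measurableSet_Ico]
        refine (hK _ _).trans (le_of_eq ?_)
        congr 2; ring
    _ = _ := by simp

lemma ico_bound_scale {Ω : Type} [MeasurableSpace Ω] (μ : Measure Ω)
    (X : Ω → ℝ) (hX : Measurable X) (c : ℝ) (hc : 0 ≤ c) (f : ℝ → ℝ) (hf : ∀ t, f t ≤ c)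
    (hd : μ.map X = volume.withDensity (fun t => ENNReal.ofReal (f t))) (r N : ℝ)
    (hr : 0 < r) (hN : 1 ≤ N * r) (a b : ℝ) :
    μ ((fun ω => r * X ω) ⁻¹' Set.Ico a b) ≤ ENNReal.ofReal (N * c * (b - a)) := by
  rcases le_or_gt b a with hab | hab
  · simp [Set.Ico_eq_empty_of_le hab]
  have e : (fun ω => r * X ω) ⁻¹' Set.Ico a b = X ⁻¹' Set.Ico (a / r) (b / r) := by
    ext ω
    simp only [Set.mem_preimage, Set.mem_Ico, div_le_iff₀' hr, lt_div_iff₀' hr]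
  rw [e, ← Measure.map_apply hX measurableSet_Ico, hd, withDensity_apply _ measurableSet_Ico]
  calc _ ≤ ∫⁻ _ in Set.Ico (a / r) (b / r), ENNReal.ofReal c :=
        lintegral_mono fun t => ENNReal.ofReal_le_ofReal (hf t)
    _ = ENNReal.ofReal (c * (b / r - a / r)) := by
        rw [setLIntegral_const, Real.volume_Ico, ← ENNReal.ofReal_mul hc]
    _ ≤ _ := by
        apply ENNReal.ofReal_le_ofReal
        have h1 : 1 / r ≤ N := by rw [div_le_iff₀ hr]; exact hN
        have h2 : 0 ≤ c * (b - a) := mul_nonneg hc (by linarith)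
        calc c * (b / r - a / r) = (1 / r) * (c * (b - a)) := by ring
          _ ≤ N * (c * (b - a)) := mul_le_mul_of_nonneg_right h1 h2
          _ = _ := by ring

/-- Conditional-Lipschitz property in `θ` of the θ-component of the CVaR
stochastic gradient `H_θ((θ,w), x) = 1 − (1/(1−q̄)) 1_{Σᵢ gᵢ(w) xᵢ ≥ θ} + 2γθ`, where the
`Xᵢ` are i.i.d. with densities bounded by `c` and `gᵢ(w)` are the softmax weights:
`E[|H_θ((θ,w),X) − H_θ((θ',w),X)|] ≤ (2γ + 2nc/(1−q̄)) |θ−θ'|`. -/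
theorem cvar_gradient_conditional_lipschitz {n : ℕ} (hn : 1 ≤ n)
    {Ω : Type} [MeasurableSpace Ω] (μ : Measure Ω) [IsProbabilityMeasure μ]
    (q γ c : ℝ) (hq0 : 0 < q) (hq1 : q < 1) (hγ : 0 < γ) (hc : 0 ≤ c)
    (X : Fin n → Ω → ℝ) (hXmeas : ∀ i, Measurable (X i))
    (hXindep : iIndepFun X μ)
    (hXid : ∀ i j, Measure.map (X i) μ = Measure.map (X j) μ)
    (hdens : ∀ i, ∃ f : ℝ → ℝ, (∀ t, 0 ≤ f t ∧ f t ≤ c) ∧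
      Measure.map (X i) μ = volume.withDensity (fun t => ENNReal.ofReal (f t)))
    (g : (Fin n → ℝ) → Fin n → ℝ)
    (hg : ∀ w i, g w i = Real.exp (w i) / ∑ j, Real.exp (w j))
    (Hθ : ℝ → (Fin n → ℝ) → (Fin n → ℝ) → ℝ)
    (hHθ : ∀ θ w x, Hθ θ w x =
      1 - (1 / (1 - q)) * Set.indicator {y : ℝ | θ ≤ y} (1 : ℝ → ℝ) (∑ i, g w i * x i)
        + 2 * γ * θ) :
    ∀ (θ θ' : ℝ) (w : Fin n → ℝ),
      ∫ ω, |Hθ θ w (fun i => X i ω) - Hθ θ' w (fun i => X i ω)| ∂μ ≤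
        (2 * γ + 2 * n * c / (1 - q)) * |θ - θ'| := by
  intro θ θ' w
  have hn0 : 0 < n := hn
  have hne : (Finset.univ : Finset (Fin n)).Nonempty := ⟨⟨0, hn0⟩, Finset.mem_univ _⟩
  have hS : 0 < ∑ j, Real.exp (w j) := Finset.sum_pos (fun _ _ => Real.exp_pos _) hne
  have hgpos : ∀ i, 0 < g w i := fun i => by rw [hg]; exact div_pos (Real.exp_pos _) hS
  have hgsum : ∑ i, g w i = 1 := by
    simp only [hg, ← Finset.sum_div]; exact div_self hS.ne'
  obtain ⟨i, -, hi⟩ := Finset.exists_max_image Finset.univ (g w) hne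
  have hmax : 1 ≤ (n : ℝ) * g w i := by
    rw [← hgsum]
    refine (Finset.sum_le_card_nsmul _ _ _ hi).trans ?_
    simp
  have hZm : ∀ j, Measurable (fun ω => g w j * X j ω) := fun j => (hXmeas j).const_mul _
  have hZind : iIndepFun (fun j ω => g w j * X j ω) μ :=
    hXindep.comp (fun j x => g w j * x) (fun j => measurable_id.const_mul _)
  have hind := hZind.indepFun_finsetSum_of_notMem hZm (Finset.notMem_erase i Finset.univ)
  obtain ⟨f, hf, hd⟩ := hdens i
  have key : ∀ a b, μ ((fun ω => ∑ j, g w j * X j ω) ⁻¹' Set.Ico a b)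
      ≤ ENNReal.ofReal (n * c * (b - a)) := by
    intro a b
    have := ico_bound_add μ (∑ j ∈ Finset.univ.erase i, fun ω => g w j * X j ω) _
      (by simpa only [Finset.sum_fn] using Finset.measurable_fun_sum _ fun j _ => hZm j) (hZm i) hind (n * c)
      (ico_bound_scale μ (X i) (hXmeas i) c hc f (fun t => (hf t).2) hd (g w i) n (hgpos i)
        hmax) a b
    simpa only [Finset.sum_apply, Finset.sum_erase_add _ _ (Finset.mem_univ i)] using this
  have hSm : Measurable (fun ω => ∑ j, g w j * X j ω) :=
    Finset.measurable_fun_sum _ fun j _ => hZm j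
  set A : Set Ω := (fun ω => ∑ j, g w j * X j ω) ⁻¹' Set.Ico (min θ θ') (max θ θ') with hA
  have hAm : MeasurableSet A := hSm measurableSet_Ico
  have hq : 0 < 1 - q := by linarith
  have hAr : μ.real A ≤ n * c * |θ - θ'| := by
    have h := key (min θ θ') (max θ θ')
    rw [max_sub_min_eq_abs'] at h
    exact ENNReal.toReal_le_of_le_ofReal (by positivity) h
  have hIntA : Integrable (fun ω => (1 / (1 - q)) * A.indicator (1 : Ω → ℝ) ω) μ :=
    ((integrable_const (1 : ℝ)).indicator hAm).const_mul _
  have hIntB : Integrable (fun ω => (1 / (1 - q)) * A.indicator (1 : Ω → ℝ) ω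
      + 2 * γ * |θ - θ'|) μ :=
    hIntA.add (integrable_const _)
  have hpt : ∀ ω, |Hθ θ w (fun i => X i ω) - Hθ θ' w (fun i => X i ω)|
      ≤ (1 / (1 - q)) * A.indicator (1 : Ω → ℝ) ω + 2 * γ * |θ - θ'| := by
    intro ω
    rw [hHθ, hHθ]
    set s := ∑ j, g w j * X j ω with hs
    have hmem : ω ∈ A ↔ min θ θ' ≤ s ∧ s < max θ θ' := Iff.rfl
    have hI : |Set.indicator {y : ℝ | θ ≤ y} (1 : ℝ → ℝ) s
        - Set.indicator {y : ℝ | θ' ≤ y} (1 : ℝ → ℝ) s| ≤ A.indicator (1 : Ω → ℝ) ω := by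
      have h0 : 0 ≤ A.indicator (1 : Ω → ℝ) ω := Set.indicator_nonneg (fun _ _ => zero_le_one) ω
      have hone : ω ∈ A → A.indicator (1 : Ω → ℝ) ω = 1 := fun h => by
        rw [Set.indicator_of_mem h, Pi.one_apply]
      by_cases h1 : θ ≤ s <;> by_cases h2 : θ' ≤ s
      · simpa [Set.indicator, h1, h2] using h0
      · rw [hone (hmem.2 ⟨min_le_iff.2 (Or.inl h1), lt_max_iff.2 (Or.inr (not_le.1 h2))⟩)]
        simp [Set.indicator, h1, h2]
      · rw [hone (hmem.2 ⟨min_le_iff.2 (Or.inr h2), lt_max_iff.2 (Or.inl (not_le.1 h1))⟩)]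
        simp [Set.indicator, h1, h2]
      · simpa [Set.indicator, h1, h2] using h0
    have e : ∀ u v : ℝ, 1 - (1 / (1 - q)) * u + 2 * γ * θ - (1 - (1 / (1 - q)) * v + 2 * γ * θ')
        = -((1 / (1 - q)) * (u - v)) + 2 * γ * (θ - θ') := fun u v => by ring
    rw [e]
    refine (abs_add_le _ _).trans ?_
    rw [abs_neg, abs_mul, abs_mul, abs_of_pos (one_div_pos.2 hq), abs_of_pos (by linarith : 0 < 2 * γ)]
    gcongr
  calc _ ≤ ∫ ω, ((1 / (1 - q)) * A.indicator (1 : Ω → ℝ) ω + 2 * γ * |θ - θ'|) ∂μ :=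
        integral_mono_of_nonneg (Filter.Eventually.of_forall fun _ => abs_nonneg _) hIntB
          (Filter.Eventually.of_forall hpt)
    _ = (1 / (1 - q)) * μ.real A + 2 * γ * |θ - θ'| := by
        rw [integral_add hIntA (integrable_const _), integral_const_mul, integral_indicator_one hAm]
        simp
    _ ≤ (1 / (1 - q)) * (n * c * |θ - θ'|) + 2 * γ * |θ - θ'| := by gcongr
    _ ≤ _ := by
        have h0 : 0 ≤ (1 / (1 - q)) * (n * c * |θ - θ'|) := by positivity
        have e : (2 * γ + 2 * n * c / (1 - q)) * |θ - θ'|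
          = 2 * ((1 / (1 - q)) * (n * c * |θ - θ'|)) + 2 * γ * |θ - θ'| := by ring
        rw [e]; linarith
end
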